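/- Membership lemma: for letters a_1, …, a_n ∈ A and a finite set S of cedents, if the word a_1⋯a_n ∈ L(S), then the hypersequent a_1, …, a_n → S has a progressing non-wellfounded proof in μHKA, i.e., μHKA ⊢∞ a_1, …, a_n → S. -/

import Mathlib

/-!
The proof obtained is finite, so the progress condition is vacuous.

`Match w Δ` describes the ways of parsing the word `w` by repeatedly analysing the head of the
cedent `Δ`. Reading such a parse bottom-up gives a derivation of `w → {Δ}` in which every rule has
at most one premiss (`Match.proofInf`); weakening then passes from `{Δ}` to any `S` containing `Δ`.

Conversely every word of `L(Δ)` is parsed by `Δ`. Put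
`M(e) = {w | Match v Δ implies Match (w ++ v) (e :: Δ), for all v and Δ}`. The `μ` case of `Match`
says `M(e(μX e)) ⊆ M(μX e)`, which makes `M(μX e)` a prefixed point of the operator defining
`L(μX e)`; the inclusion `L(e) ⊆ M(e)` then follows by induction on `e`, generalised to open
expressions under substitutions of closed expressions (`sem_le_matchLang`).
-/

namespace CFPT

/-- `μ`-expressions over alphabet `α`, with de Bruijn indices for variables. -/
inductive Exp (α : Type) : Type
  | zero : Exp α
  | one : Exp α
  | var (n : ℕ) : Exp α
  | tok (a : α) : Exp α
  | plus (e f : Exp α) : Exp α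
  | times (e f : Exp α) : Exp α
  | mu (e : Exp α) : Exp α
  deriving DecidableEq

namespace Exp

variable {α : Type}

/-- all de Bruijn indices are `< k` -/
def ClosedUnder : ℕ → Exp α → Prop
  | _, zero => True
  | _, one => True
  | k, var n => n < k
  | _, tok _ => True
  | k, plus e f => ClosedUnder k e ∧ ClosedUnder k f
  | k, times e f => ClosedUnder k e ∧ ClosedUnder k f
  | k, mu e => ClosedUnder (k + 1) e

def Closed (e : Exp α) : Prop := ClosedUnder 0 e

/-- substitute the closed expression `g` for de Bruijn variable `d`. -/
def subst (g : Exp α) : ℕ → Exp α → Exp α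
  | _, zero => zero
  | _, one => one
  | d, var n => if n = d then g else var n
  | _, tok a => tok a
  | d, plus e f => plus (subst g d e) (subst g d f)
  | d, times e f => times (subst g d e) (subst g d f)
  | d, mu e => mu (subst g (d + 1) e)

/-- the unfolding `e(μX e)` of the fixed point `μX e` (given by its body `e`). -/
def unfold (e : Exp α) : Exp α := subst (mu e) 0 e

/-- the approximants `e^n(0)` of `μX e` (given by its body `e`):
`e^0(0) = 0` and `e^(n+1)(0) = e(e^n(0))`. -/
def iter (e : Exp α) : ℕ → Exp α
  | 0 => zero
  | n + 1 => subst (iter e n) 0 e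

/-- left-productive expressions: `p ::= a | p+q | p·e | μX p` -/
inductive LeftProductive : Exp α → Prop
  | tok (a : α) : LeftProductive (tok a)
  | plus {p q} : LeftProductive p → LeftProductive q → LeftProductive (plus p q)
  | times {p} (e) : LeftProductive p → LeftProductive (times p e)
  | mu {p} : LeftProductive p → LeftProductive (mu p)

/-- productive expressions: `p ::= a | p+q | p·e | e·p | μX p` -/
inductive Productive : Exp α → Prop
  | tok (a : α) : Productive (tok a)
  | plus {p q} : Productive p → Productive q → Productive (plus p q)
  | timesL {p} (e) : Productive p → Productive (times p e)
  | timesR {p} (e) : Productive p → Productive (times e p)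
  | mu {p} : Productive p → Productive (mu p)

/-- every free occurrence of variable `n` in the expression occurs inside a
subexpression (in which it remains free) satisfying `P`. -/
def GuardVar (P : Exp α → Prop) : ℕ → Exp α → Prop
  | _, zero => True
  | _, one => True
  | _, tok _ => True
  | n, var m => P (var m) ∨ m ≠ n
  | n, plus e f => P (plus e f) ∨ (GuardVar P n e ∧ GuardVar P n f)
  | n, times e f => P (times e f) ∨ (GuardVar P n e ∧ GuardVar P n f)
  | n, mu e => P (mu e) ∨ GuardVar P (n + 1) e

/-- each variable occurrence occurs free in a subexpression satisfying `P`. -/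
def GuardedBy (P : Exp α → Prop) : Exp α → Prop
  | zero => True
  | one => True
  | var _ => True
  | tok _ => True
  | plus e f => GuardedBy P e ∧ GuardedBy P f
  | times e f => GuardedBy P e ∧ GuardedBy P f
  | mu e => GuardVar P 0 e ∧ GuardedBy P e

/-- each variable occurrence occurs free in a productive subexpression. -/
def Guarded (e : Exp α) : Prop := GuardedBy Productive e

/-- each variable occurrence occurs free in a left-productive subexpression. -/
def LeftGuarded (e : Exp α) : Prop := GuardedBy LeftProductive e

end Exp

/-- extend an environment by a new language for variable `0`. -/
def consEnv {α} (A : Language α) (ρ : ℕ → Language α) : ℕ → Language α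
  | 0 => A
  | n + 1 => ρ n

/-- language semantics of `μ`-expressions, relative to an environment;
`μX e` denotes the least fixed point of `A ↦ ⟦e⟧(A)` (Knaster–Tarski). -/
def sem {α} (ρ : ℕ → Language α) : Exp α → Language α
  | .zero => 0
  | .one => 1
  | .var n => ρ n
  | .tok a => {[a]}
  | .plus e f => sem ρ e + sem ρ f
  | .times e f => sem ρ e * sem ρ f
  | .mu e => sInf {A : Language α | sem (consEnv A ρ) e ≤ A}

/-- the language of a (closed) expression. -/
def langOf {α} (e : Exp α) : Language α := sem (fun _ => 0) e

/-- a cedent: a finite list of expressions. -/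
abbrev Cedent (α : Type) := List (Exp α)

/-- language of a cedent: the concatenation (product) of its members' languages. -/
def langCed {α} (Γ : Cedent α) : Language α := (Γ.map langOf).prod

/-- right-hand side of a hypersequent: a finite set of cedents. -/
abbrev RHSet (α : Type) := Finset (Cedent α)

/-- language of a RHS: the union (sum) of the languages of its cedents. -/
def langRHS {α} (S : RHSet α) : Language α := S.sup langCed

def CedClosed {α} (Γ : Cedent α) : Prop := ∀ e ∈ Γ, e.Closed
def CedGuarded {α} (Γ : Cedent α) : Prop := ∀ e ∈ Γ, e.Guarded

/-- a hypersequent `Γ → S`. -/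
structure Sqt (α : Type) : Type where
  lhs : Cedent α
  rhs : RHSet α

/-- validity of a hypersequent in the language model. -/
def Sqt.Valid {α} (s : Sqt α) : Prop := langCed s.lhs ≤ langRHS s.rhs

def Sqt.ClosedSeq {α} (s : Sqt α) : Prop :=
  CedClosed s.lhs ∧ ∀ Δ ∈ s.rhs, CedClosed Δ

def Sqt.GuardedSeq {α} (s : Sqt α) : Prop :=
  CedGuarded s.lhs ∧ ∀ Δ ∈ s.rhs, CedGuarded Δ

/-- rule instances of the hypersequential system `μHKA`. -/
inductive Rule (α : Type) : Type
  | init : Rule α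
  | wr (Γ : Cedent α) (S : RHSet α) (Δ : Cedent α) : Rule α
  | kl (a : α) (Γ : Cedent α) (S : RHSet α) : Rule α
  | kr (a : α) (Γ : Cedent α) (S : RHSet α) : Rule α
  | zeroL (Γ Γ' : Cedent α) (S : RHSet α) : Rule α
  | oneL (Γ Γ' : Cedent α) (S : RHSet α) : Rule α
  | timesL (Γ : Cedent α) (e f : Exp α) (Γ' : Cedent α) (S : RHSet α) : Rule α
  | plusL (Γ : Cedent α) (e f : Exp α) (Γ' : Cedent α) (S : RHSet α) : Rule α
  | muL (Γ : Cedent α) (e : Exp α) (Γ' : Cedent α) (S : RHSet α) : Rule α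
  | zeroR (Γ : Cedent α) (S : RHSet α) (Δ Δ' : Cedent α) : Rule α
  | oneR (Γ : Cedent α) (S : RHSet α) (Δ Δ' : Cedent α) : Rule α
  | timesR (Γ : Cedent α) (S : RHSet α) (Δ : Cedent α) (e f : Exp α) (Δ' : Cedent α) : Rule α
  | plusR (Γ : Cedent α) (S : RHSet α) (Δ : Cedent α) (e f : Exp α) (Δ' : Cedent α) : Rule α
  | muR (Γ : Cedent α) (S : RHSet α) (Δ : Cedent α) (e : Exp α) (Δ' : Cedent α) : Rule α

namespace Rule

variable {α : Type} [DecidableEq α]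

/-- conclusion of a rule instance. -/
def concl : Rule α → Sqt α
  | init => ⟨[], {[]}⟩
  | wr Γ S Δ => ⟨Γ, insert Δ S⟩
  | kl a Γ S => ⟨.tok a :: Γ, S.image (Exp.tok a :: ·)⟩
  | kr a Γ S => ⟨Γ ++ [.tok a], S.image (· ++ [Exp.tok a])⟩
  | zeroL Γ Γ' S => ⟨Γ ++ .zero :: Γ', S⟩
  | oneL Γ Γ' S => ⟨Γ ++ .one :: Γ', S⟩
  | timesL Γ e f Γ' S => ⟨Γ ++ .times e f :: Γ', S⟩
  | plusL Γ e f Γ' S => ⟨Γ ++ .plus e f :: Γ', S⟩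
  | muL Γ e Γ' S => ⟨Γ ++ .mu e :: Γ', S⟩
  | zeroR Γ S Δ Δ' => ⟨Γ, insert (Δ ++ .zero :: Δ') S⟩
  | oneR Γ S Δ Δ' => ⟨Γ, insert (Δ ++ .one :: Δ') S⟩
  | timesR Γ S Δ e f Δ' => ⟨Γ, insert (Δ ++ .times e f :: Δ') S⟩
  | plusR Γ S Δ e f Δ' => ⟨Γ, insert (Δ ++ .plus e f :: Δ') S⟩
  | muR Γ S Δ e Δ' => ⟨Γ, insert (Δ ++ .mu e :: Δ') S⟩

/-- list of premisses of a rule instance. -/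
def prems : Rule α → List (Sqt α)
  | init => []
  | wr Γ S _ => [⟨Γ, S⟩]
  | kl _ Γ S => [⟨Γ, S⟩]
  | kr _ Γ S => [⟨Γ, S⟩]
  | zeroL _ _ _ => []
  | oneL Γ Γ' S => [⟨Γ ++ Γ', S⟩]
  | timesL Γ e f Γ' S => [⟨Γ ++ e :: f :: Γ', S⟩]
  | plusL Γ e f Γ' S => [⟨Γ ++ e :: Γ', S⟩, ⟨Γ ++ f :: Γ', S⟩]
  | muL Γ e Γ' S => [⟨Γ ++ e.unfold :: Γ', S⟩]
  | zeroR Γ S _ _ => [⟨Γ, S⟩]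
  | oneR Γ S Δ Δ' => [⟨Γ, insert (Δ ++ Δ') S⟩]
  | timesR Γ S Δ e f Δ' => [⟨Γ, insert (Δ ++ e :: f :: Δ') S⟩]
  | plusR Γ S Δ e f Δ' => [⟨Γ, insert (Δ ++ e :: Δ') (insert (Δ ++ f :: Δ') S)⟩]
  | muR Γ S Δ e Δ' => [⟨Γ, insert (Δ ++ e.unfold :: Δ') S⟩]

/-- the rule is an instance of `μ-l`. -/
def IsMuL : Rule α → Prop
  | muL _ _ _ _ => True
  | _ => False

/-- logical rules (neither `init`, weakening, nor `k` rules). -/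
def IsLogical : Rule α → Prop
  | init => False
  | wr _ _ _ => False
  | kl _ _ _ => False
  | kr _ _ _ => False
  | _ => True

/-- immediate ancestry on the LHS: the formula at position `j` of the LHS of a
premiss is the immediate ancestor of the formula at position `ancL r j` of the
LHS of the conclusion. -/
def ancL : Rule α → ℕ → ℕ
  | kl _ _ _ => fun j => j + 1
  | oneL Γ _ _ => fun j => if j < Γ.length then j else j + 1
  | timesL Γ _ _ _ _ => fun j =>
      if j < Γ.length then j else if j ≤ Γ.length + 1 then Γ.length else j - 1
  | _ => fun j => j

/-- position `j` of the LHS of the conclusion is principal for a `μ-l` step. -/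
def IsPrincMuL : Rule α → ℕ → Prop
  | muL Γ _ _ _, j => j = Γ.length
  | _, _ => False

end Rule

/-- a (non-wellfounded) preproof of `μHKA`: a possibly infinite tree of rule
instances, represented by its labelling of tree positions. -/
structure Preproof (α : Type) [DecidableEq α] : Type where
  rule : List ℕ → Option (Rule α)
  root_isSome : (rule []).isSome
  children_concl : ∀ p r, rule p = some r → ∀ (i : ℕ) (h : i < r.prems.length),
    ∃ r', rule (p ++ [i]) = some r' ∧ r'.concl = r.prems.get ⟨i, h⟩
  children_none : ∀ p r, rule p = some r → ∀ i : ℕ, r.prems.length ≤ i → rule (p ++ [i]) = none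
  grounded : ∀ p i, (rule (p ++ [i])).isSome → (rule p).isSome

namespace Preproof

variable {α : Type} [DecidableEq α]

/-- the preproof has endsequent `s`. -/
def Concl (P : Preproof α) (s : Sqt α) : Prop :=
  ∃ r, P.rule [] = some r ∧ r.concl = s

/-- the node of a branch `b` at depth `n`. -/
def pathOf (b : ℕ → ℕ) (n : ℕ) : List ℕ := (List.range n).map b

/-- `b` describes an infinite branch of `P`. -/
def IsBranch (P : Preproof α) (b : ℕ → ℕ) : Prop :=
  ∀ n, (P.rule (pathOf b n)).isSome

/-- `P` is progressing: every infinite branch has infinitely many `μ-l` steps. -/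
def Progressing (P : Preproof α) : Prop :=
  ∀ b, P.IsBranch b → ∀ N, ∃ n, N ≤ n ∧ ∃ r, P.rule (pathOf b n) = some r ∧ r.IsMuL

end Preproof

/-- `μHKA ⊢∞ s` : the hypersequent `s` has a progressing non-wellfounded
(`∞`-)proof in `μHKA`. -/
def ProofInf {α : Type} [DecidableEq α] (s : Sqt α) : Prop :=
  ∃ P : Preproof α, P.Concl s ∧ P.Progressing

/-- wellfounded (possibly infinitely branching) derivability in `μHKA_ω`,
the extension of `μHKA` by the `ω`-rule. -/
inductive DerivW {α : Type} [DecidableEq α] : Sqt α → Prop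
  | rule (r : Rule α) : (∀ s ∈ r.prems, DerivW s) → DerivW r.concl
  | omega (Γ : Cedent α) (e : Exp α) (Γ' : Cedent α) (S : RHSet α) :
      (∀ n : ℕ, DerivW ⟨Γ ++ Exp.iter e n :: Γ', S⟩) → DerivW ⟨Γ ++ .mu e :: Γ', S⟩

/-- the equational theory `μCA` of `μ`-continuous Chomsky algebras:
idempotent semiring (dioid) axioms together with `μ`-continuity. -/
inductive CA {α : Type} : Exp α → Exp α → Prop
  | refl (e) : CA e e
  | symm {e f} : CA e f → CA f e
  | trans {e f g} : CA e f → CA f g → CA e g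
  | congPlus {e e' f f'} : CA e e' → CA f f' → CA (.plus e f) (.plus e' f')
  | congTimes {e e' f f'} : CA e e' → CA f f' → CA (.times e f) (.times e' f')
  | plusAssoc (e f g) : CA (.plus (.plus e f) g) (.plus e (.plus f g))
  | plusComm (e f) : CA (.plus e f) (.plus f e)
  | plusIdem (e) : CA (.plus e e) e
  | plusZero (e) : CA (.plus e .zero) e
  | timesAssoc (e f g) : CA (.times (.times e f) g) (.times e (.times f g))
  | timesOne (e) : CA (.times e .one) e
  | oneTimes (e) : CA (.times .one e) e
  | timesZero (e) : CA (.times e .zero) .zero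
  | zeroTimes (e) : CA (.times .zero e) .zero
  | distL (e f g) : CA (.times e (.plus f g)) (.plus (.times e f) (.times e g))
  | distR (e f g) : CA (.times (.plus e f) g) (.plus (.times e g) (.times f g))
  | muContLe (e f g : Exp α) (n : ℕ) :
      CA (.plus (.times e (.times (Exp.iter f n) g)) (.times e (.times (.mu f) g)))
         (.times e (.times (.mu f) g))
  | muContSup (e f g h : Exp α) :
      (∀ n : ℕ, CA (.plus (.times e (.times (Exp.iter f n) g)) h) h) →
      CA (.plus (.times e (.times (.mu f) g)) h) h

/-- the natural order `e ≤ f` of `μCA`, i.e. `e + f = f`. -/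
def CAle {α : Type} (e f : Exp α) : Prop := CA (.plus e f) f

/-- the product `∏Γ` of a cedent as an expression. -/
def prodCed {α} (Γ : Cedent α) : Exp α := Γ.foldr .times .one

/-- the sum `Σ_{Δ∈S} ∏Δ` of a RHS as an expression. -/
noncomputable def sumRHS {α} (S : RHSet α) : Exp α := (S.toList.map prodCed).foldr .plus .zero

/-! ### Building finite proofs -/

section Proofs

variable {α : Type} [DecidableEq α]

theorem Preproof.pathOf_succ (b : ℕ → ℕ) (n : ℕ) :
    pathOf b (n + 1) = b 0 :: pathOf (fun k => b (k + 1)) n := by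
  simp [pathOf, List.range_succ_eq_map, Function.comp_def]

theorem ProofInf.init : ProofInf (⟨[], {[]}⟩ : Sqt α) := by
  refine ⟨{ rule := fun p => if p = [] then some Rule.init else none
            root_isSome := by simp
            children_concl := ?_
            children_none := by simp
            grounded := by simp }, ⟨Rule.init, by simp, rfl⟩, ?_⟩
  · intro p r h i hi
    split_ifs at h
    cases h
    simp [Rule.prems] at hi
  · intro b hb
    have := hb 1
    simp [Preproof.pathOf] at this

/-- Progressing proofs are closed under rules with a single premiss. -/
theorem ProofInf.step (r : Rule α) {s : Sqt α} (hr : r.prems = [s]) (h : ProofInf s) :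
    ProofInf r.concl := by
  obtain ⟨P, ⟨r₀, hr₀, hs⟩, hP⟩ := h
  let f : List ℕ → Option (Rule α) := fun p =>
    match p with
    | [] => some r
    | 0 :: p => P.rule p
    | (_ + 1) :: _ => none
  refine ⟨{ rule := f
            root_isSome := rfl
            children_concl := ?_
            children_none := ?_
            grounded := ?_ }, ⟨r, rfl, rfl⟩, ?_⟩
  · rintro (_ | ⟨_ | k, p⟩) r' h' i hi
    · cases h'
      have hi0 : i = 0 := by simp [hr] at hi; exact hi
      subst hi0
      refine ⟨r₀, hr₀, ?_⟩
      simp [hs, hr]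
    · exact P.children_concl p r' h' i hi
    · cases h'
  · rintro (_ | ⟨_ | k, p⟩) r' h' i hi
    · cases h'
      obtain ⟨j, rfl⟩ : ∃ j, i = j + 1 := ⟨i - 1, by simp [hr] at hi; omega⟩
      rfl
    · exact P.children_none p r' h' i hi
    · cases h'
  · rintro (_ | ⟨_ | k, p⟩) i h'
    · rfl
    · exact P.grounded p i h'
    · cases h'
  · intro b hb N
    have hb0 : b 0 = 0 := by
      have h1 := hb 1
      rw [Preproof.pathOf_succ] at h1
      rcases hk : b 0 with _ | k
      · rfl
      · rw [hk] at h1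
        cases h1
    have key : ∀ n, f (Preproof.pathOf b (n + 1))
        = P.rule (Preproof.pathOf (fun k => b (k + 1)) n) := by
      intro n
      rw [Preproof.pathOf_succ, hb0]
    obtain ⟨n, hn, r', hr', hmu⟩ := hP (fun k => b (k + 1))
      (fun n => by rw [← key]; exact hb (n + 1)) N
    exact ⟨n + 1, by omega, r', (key n).trans hr', hmu⟩

theorem ProofInf.weaken {Γ : Cedent α} {T : RHSet α} (h : ProofInf ⟨Γ, T⟩) (U : RHSet α) :
    ProofInf ⟨Γ, U ∪ T⟩ := by
  induction U using Finset.induction_on with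
  | empty => simpa using h
  | insert Δ U _ ih =>
    rw [Finset.insert_union]
    exact ProofInf.step (.wr Γ (U ∪ T) Δ) rfl ih

end Proofs

/-! ### Parses of words by cedents -/

/-- `Match w Δ`: the word `w` has a finite leftmost parse by the cedent `Δ`. -/
inductive Match {α : Type} : List α → Cedent α → Prop
  | nil : Match [] []
  | tok (a : α) {w Δ} : Match w Δ → Match (a :: w) (.tok a :: Δ)
  | one {w Δ} : Match w Δ → Match w (.one :: Δ)
  | times {w e f Δ} : Match w (e :: f :: Δ) → Match w (.times e f :: Δ)
  | plusL {w e f Δ} : Match w (e :: Δ) → Match w (.plus e f :: Δ)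
  | plusR {w e f Δ} : Match w (f :: Δ) → Match w (.plus e f :: Δ)
  | mu {w e Δ} : Match w (e.unfold :: Δ) → Match w (.mu e :: Δ)

theorem Match.proofInf {α : Type} [DecidableEq α] {w : List α} {Δ : Cedent α} (h : Match w Δ) :
    ProofInf ⟨w.map Exp.tok, {Δ}⟩ := by
  induction h with
  | nil => exact ProofInf.init
  | @tok a w Δ _ ih =>
    simpa [Rule.concl] using ProofInf.step (.kl a (w.map Exp.tok) {Δ}) rfl ih
  | @one w Δ _ ih => exact ProofInf.step (.oneR (w.map Exp.tok) ∅ [] Δ) rfl ih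
  | @times w e f Δ _ ih => exact ProofInf.step (.timesR (w.map Exp.tok) ∅ [] e f Δ) rfl ih
  | @plusL w e f Δ _ ih =>
    refine ProofInf.step (.plusR (w.map Exp.tok) ∅ [] e f Δ) rfl ?_
    have := ih.weaken {f :: Δ}
    rwa [Finset.union_comm] at this
  | @plusR w e f Δ _ ih =>
    exact ProofInf.step (.plusR (w.map Exp.tok) ∅ [] e f Δ) rfl (ih.weaken {e :: Δ})
  | @mu w e Δ _ ih => exact ProofInf.step (.muR (w.map Exp.tok) ∅ [] e Δ) rfl ih

/-! ### Simultaneous substitution of closed expressions -/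

namespace Exp

variable {α : Type}

/-- Simultaneous substitution of `σ 0, σ 1, …` for the variables `d, d + 1, …`. The expressions
`σ n` are meant to be closed, so they are not shifted under binders. -/
def psubst (σ : ℕ → Exp α) : ℕ → Exp α → Exp α
  | _, zero => zero
  | _, one => one
  | d, var n => if n < d then var n else σ (n - d)
  | _, tok a => tok a
  | d, plus e f => plus (psubst σ d e) (psubst σ d f)
  | d, times e f => times (psubst σ d e) (psubst σ d f)
  | d, mu e => mu (psubst σ (d + 1) e)

/-- The substitution `g, σ 0, σ 1, …`. -/
def scons (g : Exp α) (σ : ℕ → Exp α) : ℕ → Exp α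
  | 0 => g
  | n + 1 => σ n

theorem ClosedUnder.mono {e : Exp α} : ∀ {k d : ℕ}, ClosedUnder k e → k ≤ d → ClosedUnder d e := by
  induction e with
  | zero | one | tok => intros; trivial
  | var n => intro k d h hk; exact lt_of_lt_of_le h hk
  | plus e f ihe ihf => intro k d h hk; exact ⟨ihe h.1 hk, ihf h.2 hk⟩
  | times e f ihe ihf => intro k d h hk; exact ⟨ihe h.1 hk, ihf h.2 hk⟩
  | mu e ih => intro k d h hk; exact ih (k := k + 1) (d := d + 1) h (by omega)

theorem subst_of_closedUnder (g : Exp α) {e : Exp α} :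
    ∀ {d : ℕ}, ClosedUnder d e → subst g d e = e := by
  induction e with
  | zero | one | tok => intros; rfl
  | var n =>
    intro d h
    have : n ≠ d := ne_of_lt h
    simp [subst, this]
  | plus e f ihe ihf => intro d h; simp [subst, ihe h.1, ihf h.2]
  | times e f ihe ihf => intro d h; simp [subst, ihe h.1, ihf h.2]
  | mu e ih => intro d h; simp [subst, ih (d := d + 1) h]

theorem psubst_of_closedUnder (σ : ℕ → Exp α) {e : Exp α} :
    ∀ {d : ℕ}, ClosedUnder d e → psubst σ d e = e := by
  induction e with
  | zero | one | tok => intros; rfl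
  | var n =>
    intro d h
    have : n < d := h
    simp [psubst, this]
  | plus e f ihe ihf => intro d h; simp [psubst, ihe h.1, ihf h.2]
  | times e f ihe ihf => intro d h; simp [psubst, ihe h.1, ihf h.2]
  | mu e ih => intro d h; simp [psubst, ih (d := d + 1) h]

theorem closedUnder_psubst {σ : ℕ → Exp α} (hσ : ∀ n, (σ n).Closed) (e : Exp α) :
    ∀ d, ClosedUnder d (psubst σ d e) := by
  induction e with
  | zero | one | tok => intros; trivial
  | var n =>
    intro d
    by_cases h : n < d
    · simp [psubst, h, ClosedUnder]
    · simpa [psubst, h] using (hσ (n - d)).mono (Nat.zero_le d)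
  | plus e f ihe ihf => intro d; exact ⟨ihe d, ihf d⟩
  | times e f ihe ihf => intro d; exact ⟨ihe d, ihf d⟩
  | mu e ih => intro d; exact ih (d + 1)

/-- Substituting `g` after `σ` is the substitution `g, σ 0, σ 1, …`; this identifies the unfolding
of a substituted `μX e` with a substitution instance of `e`. -/
theorem subst_psubst {σ : ℕ → Exp α} (hσ : ∀ n, (σ n).Closed) (g e : Exp α) :
    ∀ d, subst g d (psubst σ (d + 1) e) = psubst (scons g σ) d e := by
  induction e with
  | zero | one | tok => intros; rfl
  | var n =>
    intro d
    rcases lt_trichotomy n d with h | rfl | h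
    · simp [psubst, subst, h, Nat.lt_succ_of_lt h, h.ne]
    · simp [psubst, subst, scons]
    · obtain ⟨m, rfl⟩ : ∃ m, n = d + 1 + m := ⟨n - (d + 1), by omega⟩
      have h1 : ¬ d + 1 + m < d := by omega
      have h1' : ¬ d + 1 + m ≤ d := by omega
      have h2 : d + 1 + m - d = m + 1 := by omega
      have h3 : subst g d (σ m) = σ m :=
        subst_of_closedUnder g ((hσ m).mono (Nat.zero_le d))
      simp [psubst, h1, h1', h2, h3, scons]
  | plus e f ihe ihf => intro d; simp [psubst, subst, ihe, ihf]
  | times e f ihe ihf => intro d; simp [psubst, subst, ihe, ihf]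
  | mu e ih => intro d; simp [psubst, subst, ih]

end Exp

/-! ### Every word of the language is parsed -/

/-- The words which, as prefixes, are parsed by `e` in front of any parsed cedent. -/
def matchLang {α : Type} (e : Exp α) : Language α :=
  {w | ∀ v Δ, Match v Δ → Match (w ++ v) (e :: Δ)}

/-- If `σ n` parses every word of `ρ n`, then `e` instantiated by `σ` parses every word of the
language of `e` in the environment `ρ`. -/
theorem sem_le_matchLang {α : Type} (e : Exp α) :
    ∀ (ρ : ℕ → Language α) (σ : ℕ → Exp α), (∀ n, (σ n).Closed) →
      (∀ n, ρ n ≤ matchLang (σ n)) → sem ρ e ≤ matchLang (e.psubst σ 0) := by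
  induction e with
  | zero => intro ρ σ _ _ w hw; exact absurd hw (Language.notMem_zero w)
  | one =>
    intro ρ σ _ _ w hw v Δ h
    obtain rfl := (Language.mem_one w).1 hw
    exact .one h
  | var n => intro ρ σ _ hρ; simpa [sem, Exp.psubst] using hρ n
  | tok a =>
    intro ρ σ _ _ w hw v Δ h
    obtain rfl : w = [a] := hw
    exact .tok a h
  | plus e f ihe ihf =>
    intro ρ σ hσ hρ w hw v Δ h
    rcases (Language.mem_add _ _ w).1 hw with hw | hw
    · exact .plusL (ihe ρ σ hσ hρ hw v Δ h)
    · exact .plusR (ihf ρ σ hσ hρ hw v Δ h)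
  | times e f ihe ihf =>
    intro ρ σ hσ hρ w hw v Δ h
    obtain ⟨x, hx, y, hy, rfl⟩ := Language.mem_mul.1 hw
    rw [List.append_assoc]
    exact .times (ihe ρ σ hσ hρ hx _ _ (ihf ρ σ hσ hρ hy v Δ h))
  | mu e ih =>
    intro ρ σ hσ hρ
    -- By leastness it is enough that `matchLang` of the substituted `μX e` is a prefixed point.
    refine sInf_le ?_
    intro w hw v Δ h
    refine .mu ?_
    rw [Exp.unfold, Exp.subst_psubst hσ]
    refine ih _ _ ?_ ?_ hw v Δ h
    · rintro (_ | n)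
      · exact Exp.closedUnder_psubst hσ (.mu e) 0
      · exact hσ n
    · rintro (_ | n)
      · exact le_rfl
      · exact hρ n

theorem match_of_mem_langCed {α : Type} {Δ : Cedent α} (hc : CedClosed Δ) :
    ∀ {w : List α}, w ∈ langCed Δ → Match w Δ := by
  induction Δ with
  | nil =>
    intro w hw
    obtain rfl := (Language.mem_one w).1 hw
    exact .nil
  | cons e Δ ih =>
    intro w hw
    simp only [langCed, List.map_cons, List.prod_cons] at hw
    obtain ⟨x, hx, y, hy, rfl⟩ := Language.mem_mul.1 hw
    have he : e.psubst (fun _ => .zero) 0 = e :=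
      Exp.psubst_of_closedUnder _ (hc e List.mem_cons_self)
    have hle := sem_le_matchLang e (fun _ => 0) (fun _ => .zero) (fun _ => trivial)
      (fun _ w hw => absurd hw (Language.notMem_zero w))
    rw [he] at hle
    exact hle hx y Δ (ih (fun f hf => hc f (List.mem_cons_of_mem _ hf)) hy)

/-- Lemma 3.8, membership: if `a_1 ⋯ a_n ∈ L(S)` then
`μHKA ⊢∞ a_1, …, a_n → S`. -/
theorem membership {α : Type} [Fintype α] [DecidableEq α]
    (w : List α) (S : RHSet α)
    (hc : ∀ Δ ∈ S, CedClosed Δ) (hg : ∀ Δ ∈ S, CedGuarded Δ)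
    (h : w ∈ langRHS S) :
    ProofInf ⟨w.map Exp.tok, S⟩ := by
  have hle : langRHS S ≤ ({v | ∃ Δ ∈ S, v ∈ langCed Δ} : Set (List α)) :=
    Finset.sup_le fun Δ hΔ v hv => ⟨Δ, hΔ, hv⟩
  obtain ⟨Δ, hΔ, hw⟩ := hle h
  have := (match_of_mem_langCed (hc Δ hΔ) hw).proofInf.weaken S
  rwa [Finset.union_eq_left.2 (Finset.singleton_subset_iff.2 hΔ)] at this

end CFPT
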